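/- arXiv:1201.6103 — 2 statements merged into one kernel-verified Lean document; each statement's English description precedes it below -/
import Mathlib

section
/- Let b ≥ 2 and η > 0, and let ψ : [0,∞) → [0,∞) be a decreasing differentiable function with −η ≤ ψ'(s) ≤ 0 and A := ∫₀^∞ s^{b−1} ψ(s) ds ∈ (0, ∞). Then ∫₀^∞ s^{b+3} ψ(s) ds ≥ (1/(b+4))·(bA)^{(b+4)/b}·ψ(0)^{−4/b} + (1/(3b(b+4)η²))·(bA)^{(b+2)/b}·ψ(0)^{(2b−2)/b} + ((b+2)²/(72b(b+4)²η⁴))·A·ψ(0)^4. -/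
open Real MeasureTheory Set

/-!
Write `M = ψ 0` and choose `t` with `b A = M t ^ b`, so that the step profile of height `M` on
`[0, t]` has the same moment `A` as `ψ`. The function
`P s = b s ^ (b + 4) - (b + 4) t ^ 4 s ^ b + 4 t ^ (b + 4)` satisfies
`P' s = b (b + 4) (s ^ (b + 3) - t ^ 4 s ^ (b - 1))`, so integration by parts gives
`b (b + 4) (∫ s ^ (b + 3) ψ - t ^ 4 A) = ∫ P (-ψ') - P 0 M`. The boundary term accounts for the
first term of the bound. In the remaining integral `-ψ'` is a density bounded by `η` with total
mass `M`, while `P s` is at least `5 t ^ (b + 2) * min ((s - t) ^ 2) (3 / 4 * t ^ 2)`. By the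
bathtub principle `∫ P (-ψ')` is at least the integral of this minorant against the density `η` on
the interval of length `M / η` centred at `t`, which produces the second and third terms. This
needs `(M / η) ^ 2 ≤ 3 t ^ 2`, which holds because `ψ` dominates the tent `M - η s` and hence `A`
cannot be too small.
-/

section Bernoulli

variable {b p q t w x : ℝ}

lemma rpow_le_one_add_div_mul_rpow_sub_one (hx : 0 ≤ x) (hp : 0 ≤ p) (hpq : p ≤ q) (hq : 0 < q) :
    x ^ p ≤ 1 + p / q * (x ^ q - 1) := by
  have hxq : -1 ≤ x ^ q - 1 := by linarith [rpow_nonneg hx q]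
  have bernoulli := rpow_one_add_le_one_add_mul_self hxq (div_nonneg hp hq.le)
    ((div_le_one hq).2 hpq)
  rwa [add_sub_cancel, ← rpow_mul hx, mul_div_cancel₀ _ hq.ne'] at bernoulli

lemma sq_le_three_mul_sq_of_rpow_le (hb : 2 ≤ b) (ht : 0 ≤ t) (hw : 0 ≤ w)
    (h : w ^ b ≤ (b + 1) * t ^ b) : w ^ 2 ≤ 3 * t ^ 2 := by
  have bernoulli : b + 1 ≤ 3 ^ (b / 2) := by
    have := one_add_mul_self_le_rpow_one_add (s := 2) (by norm_num) (p := b / 2) (by linarith)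
    norm_num at this
    linarith
  have sq_rpow {y : ℝ} (hy : 0 ≤ y) : (y ^ 2) ^ (b / 2) = y ^ b := by
    rw [← rpow_natCast_mul hy, Nat.cast_ofNat, mul_div_cancel₀ _ two_ne_zero]
  refine (rpow_le_rpow_iff (z := b / 2) (by positivity) (by positivity) (by positivity)).1 ?_
  calc (w ^ 2) ^ (b / 2) = w ^ b := sq_rpow hw
    _ ≤ (b + 1) * t ^ b := h
    _ ≤ 3 ^ (b / 2) * t ^ b := by gcongr
    _ = (3 * t ^ 2) ^ (b / 2) := by rw [mul_rpow (by norm_num) (by positivity), sq_rpow ht]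

end Bernoulli

section MomentGap

variable {b r s t x : ℝ}

/-- The potential `P` obtained by integrating `b (b + 4) (s ^ (b + 3) - t ^ 4 s ^ (b - 1))` and
choosing the constant so that it vanishes at its minimum `s = t`. Integrated against `-ψ'`, it
compares the moments of `ψ` of orders `b + 3` and `b - 1`. -/
noncomputable def momentGap (b t s : ℝ) : ℝ :=
  b * s ^ (b + 4) - (b + 4) * t ^ 4 * s ^ b + 4 * t ^ (b + 4)

lemma momentGap_zero_right (hb : 0 < b) : momentGap b t 0 = 4 * t ^ (b + 4) := by
  rw [momentGap, zero_rpow (by linarith), zero_rpow hb.ne']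
  ring

lemma hasDerivAt_momentGap (hb : 1 ≤ b) (t s : ℝ) :
    HasDerivAt (momentGap b t) (b * (b + 4) * (s ^ (b + 3) - t ^ 4 * s ^ (b - 1))) s := by
  have hpow := hasDerivAt_rpow_const (x := s) (p := b + 4) (Or.inr (by linarith))
  have hpow' := hasDerivAt_rpow_const (x := s) (p := b) (Or.inr hb)
  refine (((hpow.const_mul b).sub (hpow'.const_mul ((b + 4) * t ^ 4))).add_const
    (4 * t ^ (b + 4))).congr_deriv ?_
  rw [show b + 4 - 1 = b + 3 by ring]
  ring

lemma momentGap_eq_rpow_mul (ht : 0 < t) (hs : 0 ≤ s) :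
    momentGap b t s = t ^ (b + 4) * momentGap b 1 (s / t) := by
  have ht4 : t ^ (b + 4) = t ^ b * t ^ 4 := mod_cast rpow_add_natCast ht.ne' b 4
  have htb : t ^ b ≠ 0 := (rpow_pos_of_pos ht b).ne'
  simp only [momentGap, div_rpow hs ht.le, one_rpow, ht4]
  field_simp

-- The left-hand side equals `(x - 1) ^ 2 * (4 + 8 * x)`.
lemma le_momentGap_one (hb : 2 ≤ b) (hx : 0 ≤ x) :
    4 - 12 * x ^ 2 + 8 * x ^ 3 ≤ momentGap b 1 x := by
  have bernoulli := rpow_le_one_add_div_mul_rpow_sub_one hx (p := b - 2) (q := b + 2)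
    (by linarith) (by linarith) (by linarith)
  have bernoulli' := rpow_le_one_add_div_mul_rpow_sub_one hx (p := 1) (q := b + 2)
    zero_le_one (by linarith) (by linarith)
  rw [rpow_one] at bernoulli'
  have factor_sq : (b + 4) * x ^ (b - 2) + 8 * x ≤ b * x ^ (b + 2) + 12 :=
    calc (b + 4) * x ^ (b - 2) + 8 * x
        ≤ (b + 4) * (1 + (b - 2) / (b + 2) * (x ^ (b + 2) - 1))
          + 8 * (1 + 1 / (b + 2) * (x ^ (b + 2) - 1)) := by gcongr
      _ = b * x ^ (b + 2) + 12 := by field_simp; ring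
  have hpow : x ^ (b + 4) = x ^ (b + 2) * x ^ 2 := by
    rw [← rpow_add_natCast' hx (by push_cast; linarith)]
    norm_num [add_assoc]
  have hpow' : x ^ b = x ^ (b - 2) * x ^ 2 := by
    rw [← rpow_add_natCast' hx (by push_cast; linarith)]
    norm_num
  simp only [momentGap, one_rpow, one_pow, hpow, hpow']
  nlinarith [mul_le_mul_of_nonneg_right factor_sq (sq_nonneg x)]

lemma five_mul_min_le_momentGap_one (hb : 2 ≤ b) (hx : 0 ≤ x) :
    5 * min ((x - 1) ^ 2) (3 / 4) ≤ momentGap b 1 x := by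
  refine le_trans ?_ (le_momentGap_one hb hx)
  rcases le_total (1 / 8) x with hx8 | hx8
  · have := min_le_left ((x - 1) ^ 2) (3 / 4)
    nlinarith [mul_nonneg (sq_nonneg (x - 1)) (sub_nonneg.2 hx8)]
  · have := min_le_right ((x - 1) ^ 2) (3 / 4)
    nlinarith [pow_nonneg hx 3]

lemma rpow_mul_min_le_momentGap (hb : 2 ≤ b) (ht : 0 < t) (hs : 0 ≤ s) :
    5 * t ^ (b + 2) * min ((s - t) ^ 2) (3 / 4 * t ^ 2) ≤ momentGap b t s := by
  have ht4 : t ^ (b + 4) = t ^ (b + 2) * t ^ 2 := by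
    rw [← rpow_add_natCast ht.ne']
    norm_num [add_assoc]
  have hmin : min ((s - t) ^ 2) (3 / 4 * t ^ 2) = t ^ 2 * min ((s / t - 1) ^ 2) (3 / 4) := by
    rw [mul_min_of_nonneg _ _ (sq_nonneg t), ← mul_pow, mul_sub, mul_div_cancel₀ _ ht.ne', mul_one,
      mul_comm (t ^ 2)]
  calc 5 * t ^ (b + 2) * min ((s - t) ^ 2) (3 / 4 * t ^ 2)
      = t ^ (b + 4) * (5 * min ((s / t - 1) ^ 2) (3 / 4)) := by rw [hmin, ht4]; ring
    _ ≤ t ^ (b + 4) * momentGap b 1 (s / t) := by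
      gcongr
      exact five_mul_min_le_momentGap_one hb (by positivity)
    _ = momentGap b t s := (momentGap_eq_rpow_mul ht hs).symm

lemma max_sub_momentGap_le (hb : 2 ≤ b) (ht : 0 < t) (hrt : r ^ 2 ≤ 3 / 4 * t ^ 2) (hs : 0 ≤ s) :
    max (5 * t ^ (b + 2) * r ^ 2 - momentGap b t s) 0 ≤
      5 * t ^ (b + 2) * max (r ^ 2 - (s - t) ^ 2) 0 := by
  have hκ : 0 ≤ 5 * t ^ (b + 2) := by positivity
  have hcap : r ^ 2 - min ((s - t) ^ 2) (3 / 4 * t ^ 2) ≤ max (r ^ 2 - (s - t) ^ 2) 0 := by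
    rw [← max_sub_sub_left]
    exact max_le_max le_rfl (by linarith)
  refine max_le ?_ (mul_nonneg hκ (le_max_right _ _))
  linarith [rpow_mul_min_le_momentGap hb ht hs, mul_le_mul_of_nonneg_left hcap hκ]

lemma mul_sq_le_momentGap_of_two_mul_le (hb : 2 ≤ b) (ht : 0 < t) (hrt : r ^ 2 ≤ 3 / 4 * t ^ 2)
    (hs : 2 * t ≤ s) : 5 * t ^ (b + 2) * r ^ 2 ≤ momentGap b t s := by
  have hmin : r ^ 2 ≤ min ((s - t) ^ 2) (3 / 4 * t ^ 2) := le_min (by nlinarith) hrt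
  calc 5 * t ^ (b + 2) * r ^ 2
      ≤ 5 * t ^ (b + 2) * min ((s - t) ^ 2) (3 / 4 * t ^ 2) := by gcongr
    _ ≤ momentGap b t s := rpow_mul_min_le_momentGap hb ht (by linarith)

lemma intervalIntegral_deriv_momentGap_mul {ψ : ℝ → ℝ} (hb : 1 ≤ b) (hψ : Continuous ψ)
    (t x y : ℝ) :
    ∫ s in x..y, b * (b + 4) * (s ^ (b + 3) - t ^ 4 * s ^ (b - 1)) * ψ s =
      b * (b + 4) * ((∫ s in x..y, s ^ (b + 3) * ψ s)
        - t ^ 4 * ∫ s in x..y, s ^ (b - 1) * ψ s) := by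
  have hlow : Continuous fun s : ℝ ↦ s ^ (b - 1) := continuous_rpow_const (by linarith)
  have hhigh : Continuous fun s : ℝ ↦ s ^ (b + 3) := continuous_rpow_const (by linarith)
  rw [← intervalIntegral.integral_const_mul, ← intervalIntegral.integral_sub
    (Continuous.intervalIntegrable (by fun_prop) _ _)
    (Continuous.intervalIntegrable (by fun_prop) _ _), ← intervalIntegral.integral_const_mul]
  exact intervalIntegral.integral_congr fun s _ ↦ by ring

end MomentGap

section Bathtub

variable {a b η r t R : ℝ} {f f' ψ ψ' : ℝ → ℝ}

lemma max_sq_sub_sq_eq_indicator (hr : 0 ≤ r) :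
    (fun s : ℝ ↦ max (r ^ 2 - s ^ 2) 0) = (Icc (-r) r).indicator fun s ↦ r ^ 2 - s ^ 2 := by
  ext s
  by_cases hs : s ∈ Icc (-r) r
  · rw [indicator_of_mem hs, max_eq_left (sub_nonneg.2 (sq_le_sq' hs.1 hs.2))]
  · rw [indicator_of_notMem hs, max_eq_right]
    by_contra! h
    exact hs (abs_le.1 (abs_le_of_sq_le_sq (by linarith) hr))

lemma integrable_max_sq_sub_sq (hr : 0 ≤ r) : Integrable fun s : ℝ ↦ max (r ^ 2 - s ^ 2) 0 := by
  rw [max_sq_sub_sq_eq_indicator hr, integrable_indicator_iff measurableSet_Icc]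
  exact ContinuousOn.integrableOn_Icc (by fun_prop)

lemma integral_max_sq_sub_sq (hr : 0 ≤ r) : ∫ s : ℝ, max (r ^ 2 - s ^ 2) 0 = 4 / 3 * r ^ 3 := by
  rw [max_sq_sub_sq_eq_indicator hr, integral_indicator measurableSet_Icc,
    integral_Icc_eq_integral_Ioc, ← intervalIntegral.integral_of_le (by linarith),
    intervalIntegral.integral_sub (by simp) (by simp), intervalIntegral.integral_const,
    integral_pow, smul_eq_mul]
  norm_num
  ring

lemma intervalIntegral_max_sq_sub_sq_le (hab : a ≤ b) (hr : 0 ≤ r) :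
    ∫ s in a..b, max (r ^ 2 - (s - t) ^ 2) 0 ≤ 4 / 3 * r ^ 3 := by
  rw [intervalIntegral.integral_of_le hab, ← integral_max_sq_sub_sq hr,
    ← integral_sub_right_eq_self (fun s ↦ max (r ^ 2 - s ^ 2) 0) t]
  exact setIntegral_le_integral ((integrable_max_sq_sub_sq hr).comp_sub_right t)
    (.of_forall fun s ↦ le_max_right _ _)

lemma intervalIntegral_max_sub_momentGap_le (hb : 2 ≤ b) (ht : 0 < t) (hR : 0 ≤ R) (hr : 0 ≤ r)
    (hrt : r ^ 2 ≤ 3 / 4 * t ^ 2) :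
    ∫ s in (0 : ℝ)..R, max (5 * t ^ (b + 2) * r ^ 2 - momentGap b t s) 0 ≤
      5 * t ^ (b + 2) * (4 / 3 * r ^ 3) := by
  have hgap : Continuous (momentGap b t) :=
    continuous_iff_continuousAt.2 fun s ↦ (hasDerivAt_momentGap (by linarith) t s).continuousAt
  calc ∫ s in (0 : ℝ)..R, max (5 * t ^ (b + 2) * r ^ 2 - momentGap b t s) 0
      ≤ ∫ s in (0 : ℝ)..R, 5 * t ^ (b + 2) * max (r ^ 2 - (s - t) ^ 2) 0 :=
        intervalIntegral.integral_mono_on hR (Continuous.intervalIntegrable (by fun_prop) _ _)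
          (Continuous.intervalIntegrable (by fun_prop) _ _)
          fun s hs ↦ max_sub_momentGap_le hb ht hrt hs.1
    _ ≤ 5 * t ^ (b + 2) * (4 / 3 * r ^ 3) := by
        rw [intervalIntegral.integral_const_mul]
        gcongr
        exact intervalIntegral_max_sq_sub_sq_le hR hr

-- The bathtub principle in dual form: since `0 ≤ -ψ' ≤ η`, the integral of `f * (-ψ')` is at most
-- its value when `-ψ' = η` exactly where `f > 0`.
lemma apply_mul_add_integral_deriv_mul_le (hab : a ≤ b)
    (hf : ∀ s ∈ Icc a b, HasDerivAt f (f' s) s) (hf' : IntervalIntegrable f' volume a b)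
    (hψ : ∀ s ∈ Icc a b, HasDerivAt ψ (ψ' s) s) (hψ' : ∀ s ∈ Icc a b, -η ≤ ψ' s ∧ ψ' s ≤ 0)
    (hfb : f b ≤ 0) (hψb : 0 ≤ ψ b) :
    f a * ψ a + ∫ s in a..b, f' s * ψ s ≤ η * ∫ s in a..b, max (f s) 0 := by
  rw [← uIcc_of_le hab] at hf hψ
  have hf_cont : ContinuousOn f (uIcc a b) := HasDerivAt.continuousOn hf
  have hψ_cont : ContinuousOn ψ (uIcc a b) := HasDerivAt.continuousOn hψ
  have hψ'_int : IntervalIntegrable (fun s ↦ -ψ' s) volume a b := by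
    have hIoo {s} (hs : s ∈ Ioo (min a b) (max a b)) : s ∈ uIcc a b := Ioo_subset_Icc_self hs
    exact intervalIntegral.intervalIntegrable_deriv_of_nonneg (g := fun s ↦ -ψ s) hψ_cont.neg
      (fun s hs ↦ (hψ s (hIoo hs)).neg)
      fun s hs ↦ neg_nonneg.2 (hψ' s (uIcc_of_le hab ▸ hIoo hs)).2
  have parts := intervalIntegral.integral_mul_deriv_eq_deriv_mul (v' := ψ') hf hψ hf'
    (by simpa [Pi.neg_def] using hψ'_int.neg)
  have bathtub : ∫ s in a..b, f s * -ψ' s ≤ ∫ s in a..b, η * max (f s) 0 := by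
    refine intervalIntegral.integral_mono_on hab (hψ'_int.continuousOn_mul hf_cont)
      ((ContinuousOn.sup hf_cont continuousOn_const).intervalIntegrable.const_mul η) fun s hs ↦ ?_
    obtain ⟨hlower, hupper⟩ := hψ' s hs
    calc f s * -ψ' s ≤ max (f s) 0 * -ψ' s := by gcongr; exacts [by linarith, le_max_left _ _]
      _ ≤ max (f s) 0 * η := by gcongr; linarith
      _ = η * max (f s) 0 := mul_comm _ _
  simp only [mul_neg, intervalIntegral.integral_neg, intervalIntegral.integral_const_mul]
    at bathtub
  linarith [mul_nonpos_of_nonpos_of_nonneg hfb hψb]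

end Bathtub

section Tent

variable {b η w : ℝ} {ψ : ℝ → ℝ}

lemma sub_mul_le_of_neg_le_deriv (hdiff : Differentiable ℝ ψ)
    (hderiv : ∀ s, 0 ≤ s → -η ≤ deriv ψ s) {s : ℝ} (hs : 0 ≤ s) : ψ 0 - η * s ≤ ψ s := by
  have := (convex_Ici (0 : ℝ)).mul_sub_le_image_sub_of_le_deriv hdiff.continuous.continuousOn
    hdiff.differentiableOn (fun x hx ↦ hderiv x (interior_subset hx)) 0 self_mem_Ici s hs hs
  linarith

lemma integral_rpow_sub_one_mul_sub (hb : 0 < b) (hw : 0 ≤ w) :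
    ∫ s in (0 : ℝ)..w, s ^ (b - 1) * (w - s) = w ^ (b + 1) / (b * (b + 1)) := by
  have hexpand : ∀ s ∈ uIcc 0 w, s ^ (b - 1) * (w - s) = s ^ (b - 1) * w - s ^ b := by
    intro s hs
    rw [uIcc_of_le hw] at hs
    rw [mul_sub, ← rpow_add_one' hs.1 (by linarith), sub_add_cancel]
  rw [intervalIntegral.integral_congr hexpand, intervalIntegral.integral_sub
    ((intervalIntegral.intervalIntegrable_rpow' (by linarith)).mul_const w)
    (intervalIntegral.intervalIntegrable_rpow' (by linarith)),
    intervalIntegral.integral_mul_const, integral_rpow (Or.inl (by linarith)),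
    integral_rpow (Or.inl (by linarith)), sub_add_cancel, zero_rpow hb.ne',
    zero_rpow (by linarith), rpow_add_one' hw (by linarith)]
  field_simp
  ring

lemma mul_rpow_div_le_integral_Ioi (hb : 1 ≤ b) (hw : 0 ≤ w) (hψ0 : ψ 0 = η * w)
    (hpos : ∀ s, 0 ≤ s → 0 ≤ ψ s) (hdiff : Differentiable ℝ ψ)
    (hderiv : ∀ s, 0 ≤ s → -η ≤ deriv ψ s)
    (hint : IntegrableOn (fun s ↦ s ^ (b - 1) * ψ s) (Ioi 0)) :
    η * w ^ (b + 1) / (b * (b + 1)) ≤ ∫ s in Ioi (0 : ℝ), s ^ (b - 1) * ψ s := by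
  have hcont : Continuous fun s : ℝ ↦ s ^ (b - 1) := continuous_rpow_const (by linarith)
  calc η * w ^ (b + 1) / (b * (b + 1))
      = ∫ s in (0 : ℝ)..w, η * (s ^ (b - 1) * (w - s)) := by
        rw [intervalIntegral.integral_const_mul, integral_rpow_sub_one_mul_sub (by linarith) hw,
          mul_div_assoc]
    _ ≤ ∫ s in (0 : ℝ)..w, s ^ (b - 1) * ψ s := by
        refine intervalIntegral.integral_mono_on hw
          (Continuous.intervalIntegrable (by fun_prop) _ _)
          ((hcont.mul hdiff.continuous).intervalIntegrable _ _) fun s hs ↦ ?_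
        have tent : η * (w - s) ≤ ψ s := by
          linarith [sub_mul_le_of_neg_le_deriv hdiff hderiv hs.1]
        rw [mul_left_comm]
        exact mul_le_mul_of_nonneg_left tent (rpow_nonneg hs.1 _)
    _ ≤ ∫ s in Ioi (0 : ℝ), s ^ (b - 1) * ψ s := by
        rw [intervalIntegral.integral_of_le hw]
        refine setIntegral_mono_set hint ?_ Ioc_subset_Ioi_self.eventuallyLE
        filter_upwards [ae_restrict_mem measurableSet_Ioi] with s hs
        exact mul_nonneg (rpow_nonneg (le_of_lt hs) _) (hpos s (le_of_lt hs))

end Tent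

section Moments

variable {b p η t R : ℝ} {ψ : ℝ → ℝ}

lemma pos_of_antitoneOn_of_integral_rpow_mul_pos (hanti : AntitoneOn ψ (Ici 0))
    (hint : 0 < ∫ s in Ioi (0 : ℝ), s ^ p * ψ s) : 0 < ψ 0 := by
  by_contra! hψ0
  refine hint.not_ge (setIntegral_nonpos measurableSet_Ioi fun s hs ↦ ?_)
  have hs0 : 0 ≤ s := le_of_lt hs
  exact mul_nonpos_of_nonneg_of_nonpos (rpow_nonneg hs0 p)
    ((hanti self_mem_Ici hs0 hs0).trans hψ0)

lemma div_sq_le_three_mul_sq (hb : 2 ≤ b) (hη : 0 < η) (ht : 0 < t) (hψ0 : 0 < ψ 0)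
    (hpos : ∀ s, 0 ≤ s → 0 ≤ ψ s) (hdiff : Differentiable ℝ ψ)
    (hderiv : ∀ s, 0 ≤ s → -η ≤ deriv ψ s)
    (hint : IntegrableOn (fun s ↦ s ^ (b - 1) * ψ s) (Ioi 0))
    (hmoment : b * ∫ s in Ioi (0 : ℝ), s ^ (b - 1) * ψ s = ψ 0 * t ^ b) :
    (ψ 0 / η) ^ 2 ≤ 3 * t ^ 2 := by
  have hw : 0 < ψ 0 / η := by positivity
  have tent := mul_rpow_div_le_integral_Ioi (by linarith) hw.le (mul_div_cancel₀ _ hη.ne').symm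
    hpos hdiff hderiv hint
  refine sq_le_three_mul_sq_of_rpow_le hb ht.le hw.le (le_of_mul_le_mul_left ?_ hψ0)
  rw [rpow_add_one hw.ne', mul_left_comm, mul_div_cancel₀ _ hη.ne',
    div_le_iff₀ (by positivity)] at tent
  linear_combination tent + (b + 1) * hmoment

lemma moment_add_le_moment_intervalIntegral (hb : 2 ≤ b) (hη : 0 < η) (ht : 0 < t)
    (hψ0 : 0 ≤ ψ 0) (hψR : 0 ≤ ψ R) (hdiff : Differentiable ℝ ψ)
    (hderiv : ∀ s, 0 ≤ s → -η ≤ deriv ψ s ∧ deriv ψ s ≤ 0)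
    (hwidth : (ψ 0 / η) ^ 2 ≤ 3 * t ^ 2) (hR : 2 * t ≤ R) :
    t ^ 4 * (∫ s in (0 : ℝ)..R, s ^ (b - 1) * ψ s)
        + (5 / (12 * η ^ 2) * ψ 0 ^ 3 * t ^ (b + 2) - 4 * ψ 0 * t ^ (b + 4)) / (b * (b + 4))
      ≤ ∫ s in (0 : ℝ)..R, s ^ (b + 3) * ψ s := by
  have hR0 : 0 ≤ R := by linarith
  set κ := 5 * t ^ (b + 2)
  set r := ψ 0 / (2 * η) with hr
  have hr0 : 0 ≤ r := by positivity
  have hrt : r ^ 2 ≤ 3 / 4 * t ^ 2 := by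
    rw [hr, mul_comm 2 η, ← div_div, div_pow]
    linarith
  have hlow : Continuous fun s : ℝ ↦ s ^ (b - 1) := continuous_rpow_const (by linarith)
  have hhigh : Continuous fun s : ℝ ↦ s ^ (b + 3) := continuous_rpow_const (by linarith)
  have hRgap : κ * r ^ 2 - momentGap b t R ≤ 0 :=
    sub_nonpos.2 (mul_sq_le_momentGap_of_two_mul_le hb ht hrt hR)
  have bathtub := apply_mul_add_integral_deriv_mul_le hR0
    (fun s _ ↦ (hasDerivAt_momentGap (by linarith) t s).const_sub (κ * r ^ 2))
    (Continuous.intervalIntegrable (by fun_prop) _ _)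
    (fun s _ ↦ (hdiff s).hasDerivAt) (fun s hs ↦ hderiv s hs.1) hRgap hψR
  have hbump : η * ∫ s in (0 : ℝ)..R, max (κ * r ^ 2 - momentGap b t s) 0 ≤
      η * (κ * (4 / 3 * r ^ 3)) :=
    mul_le_mul_of_nonneg_left (intervalIntegral_max_sub_momentGap_le hb ht hR0 hr0 hrt) hη.le
  have hgain : κ * r ^ 2 * ψ 0 - η * (κ * (4 / 3 * r ^ 3)) =
      5 / (12 * η ^ 2) * ψ 0 ^ 3 * t ^ (b + 2) := by
    simp only [κ, hr]
    field_simp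
    ring
  simp only [neg_mul, intervalIntegral.integral_neg, momentGap_zero_right (by linarith : 0 < b),
    intervalIntegral_deriv_momentGap_mul (by linarith : 1 ≤ b) hdiff.continuous] at bathtub
  rw [← le_sub_iff_add_le', div_le_iff₀ (by positivity)]
  linear_combination bathtub + hbump - hgain

end Moments

section Limit

open Filter Topology

lemma ofReal_integral_le_lintegral_ofReal {α : Type*} [MeasurableSpace α] {μ : Measure α}
    (f : α → ℝ) : ENNReal.ofReal (∫ x, f x ∂μ) ≤ ∫⁻ x, ENNReal.ofReal (f x) ∂μ := by
  by_cases hf : Integrable f μ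
  · refine ENNReal.ofReal_le_of_le_toReal ?_
    rw [integral_eq_lintegral_pos_part_sub_lintegral_neg_part hf]
    exact sub_le_self _ ENNReal.toReal_nonneg
  · simp [integral_undef hf]

lemma ofReal_le_lintegral_Ioi_of_tendsto {u g : ℝ → ℝ} {a l : ℝ}
    (hu : Tendsto u atTop (𝓝 l))
    (h : ∀ᶠ R in atTop, u R ≤ ∫ s in a..R, g s) :
    ENNReal.ofReal l ≤ ∫⁻ s in Ioi a, ENNReal.ofReal (g s) := by
  refine le_of_tendsto (ENNReal.tendsto_ofReal hu) ?_
  filter_upwards [h, eventually_ge_atTop a] with R hR haR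
  calc ENNReal.ofReal (u R) ≤ ENNReal.ofReal (∫ s in Ioc a R, g s) := by
        rw [← intervalIntegral.integral_of_le haR]
        exact ENNReal.ofReal_le_ofReal hR
    _ ≤ ∫⁻ s in Ioc a R, ENNReal.ofReal (g s) := ofReal_integral_le_lintegral_ofReal g
    _ ≤ ∫⁻ s in Ioi a, ENNReal.ofReal (g s) := lintegral_mono_set Ioc_subset_Ioi_self

lemma ofReal_moment_add_le_lintegral {b η t : ℝ} {ψ : ℝ → ℝ} (hb : 2 ≤ b) (hη : 0 < η) (ht : 0 < t)
    (hpos : ∀ s, 0 ≤ s → 0 ≤ ψ s) (hdiff : Differentiable ℝ ψ)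
    (hderiv : ∀ s, 0 ≤ s → -η ≤ deriv ψ s ∧ deriv ψ s ≤ 0)
    (hint : IntegrableOn (fun s ↦ s ^ (b - 1) * ψ s) (Ioi 0))
    (hwidth : (ψ 0 / η) ^ 2 ≤ 3 * t ^ 2) :
    ENNReal.ofReal (t ^ 4 * (∫ s in Ioi (0 : ℝ), s ^ (b - 1) * ψ s)
        + (5 / (12 * η ^ 2) * ψ 0 ^ 3 * t ^ (b + 2) - 4 * ψ 0 * t ^ (b + 4)) / (b * (b + 4)))
      ≤ ∫⁻ s in Ioi (0 : ℝ), ENNReal.ofReal (s ^ (b + 3) * ψ s) := by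
  refine ofReal_le_lintegral_Ioi_of_tendsto (((intervalIntegral_tendsto_integral_Ioi 0 hint
    tendsto_id).const_mul _).add_const _) ?_
  filter_upwards [eventually_ge_atTop (2 * t)] with R hR
  exact moment_add_le_moment_intervalIntegral hb hη ht (hpos 0 le_rfl) (hpos R (by linarith)) hdiff
    hderiv hwidth hR

end Limit

section MomentTerms

variable {b p q t η A M : ℝ}

lemma exists_pos_mul_eq_mul_rpow (hb : 0 < b) (hA : 0 < A) (hM : 0 < M) :
    ∃ t, 0 < t ∧ b * A = M * t ^ b := by
  refine ⟨(b * A / M) ^ b⁻¹, by positivity, ?_⟩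
  rw [rpow_inv_rpow (by positivity) hb.ne', mul_div_cancel₀ _ hM.ne']

lemma mul_rpow_rpow_div_mul_rpow (hM : 0 < M) (ht : 0 ≤ t) (hb : b ≠ 0) :
    (M * t ^ b) ^ (p / b) * M ^ q = M ^ (p / b + q) * t ^ p := by
  rw [mul_rpow hM.le (rpow_nonneg ht b), ← rpow_mul ht, mul_div_cancel₀ _ hb, mul_right_comm,
    ← rpow_add hM]

lemma mul_moment_mul_pow_four_le (hb : 1 ≤ b) (hη : 0 < η) (ht : 0 < t) (hM : 0 ≤ M)
    (hmoment : b * A = M * t ^ b) (hwidth : (M / η) ^ 2 ≤ 3 * t ^ 2) :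
    (b + 2) ^ 2 / (72 * b * (b + 4) ^ 2 * η ^ 4) * A * M ^ 4 ≤
      1 / (12 * b * (b + 4) * η ^ 2) * (M ^ 3 * t ^ (b + 2)) := by
  have ht2 : t ^ (b + 2) = t ^ b * t ^ 2 := mod_cast rpow_add_natCast ht.ne' b 2
  have hA : A = M * t ^ b / b := by rw [← hmoment]; field_simp
  have hb2 : (b + 2) ^ 2 ≤ 2 * (b * (b + 4)) := by nlinarith
  have hgap : (b + 2) ^ 2 * (M / η) ^ 2 ≤ 6 * (b * (b + 4)) * t ^ 2 :=
    calc (b + 2) ^ 2 * (M / η) ^ 2 ≤ 2 * (b * (b + 4)) * (3 * t ^ 2) := by gcongr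
      _ = 6 * (b * (b + 4)) * t ^ 2 := by ring
  calc (b + 2) ^ 2 / (72 * b * (b + 4) ^ 2 * η ^ 4) * A * M ^ 4
      = M ^ 3 * t ^ b / (72 * (b * (b + 4)) ^ 2 * η ^ 2) * ((b + 2) ^ 2 * (M / η) ^ 2) := by
        rw [hA]; field_simp
    _ ≤ M ^ 3 * t ^ b / (72 * (b * (b + 4)) ^ 2 * η ^ 2) * (6 * (b * (b + 4)) * t ^ 2) := by
        gcongr
    _ = 1 / (12 * b * (b + 4) * η ^ 2) * (M ^ 3 * t ^ (b + 2)) := by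
        rw [ht2]; field_simp; ring

lemma moment_terms_le_pow_four_mul_add (hb : 1 ≤ b) (hη : 0 < η) (ht : 0 < t) (hM : 0 < M)
    (hmoment : b * A = M * t ^ b) (hwidth : (M / η) ^ 2 ≤ 3 * t ^ 2) :
    1 / (b + 4) * (b * A) ^ ((b + 4) / b) * M ^ (-4 / b)
        + 1 / (3 * b * (b + 4) * η ^ 2) * (b * A) ^ ((b + 2) / b) * M ^ ((2 * b - 2) / b)
        + (b + 2) ^ 2 / (72 * b * (b + 4) ^ 2 * η ^ 4) * A * M ^ 4
      ≤ t ^ 4 * A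
        + (5 / (12 * η ^ 2) * M ^ 3 * t ^ (b + 2) - 4 * M * t ^ (b + 4)) / (b * (b + 4)) := by
  have hb0 : 0 < b := by linarith
  have hfirst : (b * A) ^ ((b + 4) / b) * M ^ (-4 / b) = M * t ^ (b + 4) := by
    rw [hmoment, mul_rpow_rpow_div_mul_rpow hM ht.le hb0.ne',
      show (b + 4) / b + -4 / b = 1 by field_simp; ring, rpow_one]
  have hsecond : (b * A) ^ ((b + 2) / b) * M ^ ((2 * b - 2) / b) = M ^ 3 * t ^ (b + 2) := by
    rw [hmoment, mul_rpow_rpow_div_mul_rpow hM ht.le hb0.ne',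
      show (b + 2) / b + (2 * b - 2) / b = (3 : ℕ) by push_cast; field_simp; ring, rpow_natCast]
  have hstep : t ^ 4 * A = M * t ^ (b + 4) / b := by
    have ht4 : t ^ (b + 4) = t ^ b * t ^ 4 := mod_cast rpow_add_natCast ht.ne' b 4
    rw [eq_div_iff hb0.ne', ht4]
    linear_combination t ^ 4 * hmoment
  rw [mul_assoc (1 / (b + 4)), hfirst, mul_assoc (1 / (3 * b * (b + 4) * η ^ 2)), hsecond, hstep]
  have hthird := mul_moment_mul_pow_four_le hb hη ht hM.le hmoment hwidth
  refine (add_le_add_right hthird _).trans_eq ?_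
  field_simp
  ring

end MomentTerms

theorem stmt_11 (b η : ℝ) (hb : 2 ≤ b) (hη : 0 < η) (ψ : ℝ → ℝ)
    (hpos : ∀ s, 0 ≤ s → 0 ≤ ψ s)
    (hanti : AntitoneOn ψ (Ici 0))
    (hdiff : Differentiable ℝ ψ)
    (hderiv : ∀ s, 0 ≤ s → -η ≤ deriv ψ s ∧ deriv ψ s ≤ 0)
    (A : ℝ) (hA : A = ∫ s in Ioi (0 : ℝ), s ^ (b - 1) * ψ s)
    (hApos : 0 < A)
    (hAint : IntegrableOn (fun s => s ^ (b - 1) * ψ s) (Ioi 0)) :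
    ENNReal.ofReal
        ((1 / (b + 4)) * (b * A) ^ ((b + 4) / b) * ψ 0 ^ (-(4 : ℝ) / b)
          + (1 / (3 * b * (b + 4) * η ^ (2 : ℕ))) * (b * A) ^ ((b + 2) / b) * ψ 0 ^ ((2 * b - 2) / b)
          + ((b + 2) ^ (2 : ℕ) / (72 * b * (b + 4) ^ (2 : ℕ) * η ^ (4 : ℕ))) * A * ψ 0 ^ (4 : ℕ))
      ≤ ∫⁻ s in Ioi (0 : ℝ), ENNReal.ofReal (s ^ (b + 3) * ψ s) := by
  have hψ0 : 0 < ψ 0 := pos_of_antitoneOn_of_integral_rpow_mul_pos hanti (by rwa [hA] at hApos)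
  obtain ⟨t, ht, hmoment⟩ := exists_pos_mul_eq_mul_rpow (zero_lt_two.trans_le hb) hApos hψ0
  have hwidth : (ψ 0 / η) ^ 2 ≤ 3 * t ^ 2 :=
    div_sq_le_three_mul_sq hb hη ht hψ0 hpos hdiff (fun s hs ↦ (hderiv s hs).1) hAint
      (by rwa [hA] at hmoment)
  calc ENNReal.ofReal _
      ≤ ENNReal.ofReal (t ^ 4 * A
          + (5 / (12 * η ^ 2) * ψ 0 ^ 3 * t ^ (b + 2) - 4 * ψ 0 * t ^ (b + 4)) / (b * (b + 4))) :=
        ENNReal.ofReal_le_ofReal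
          (moment_terms_le_pow_four_mul_add (one_le_two.trans hb) hη ht hψ0 hmoment hwidth)
    _ ≤ ∫⁻ s in Ioi (0 : ℝ), ENNReal.ofReal (s ^ (b + 3) * ψ s) :=
        hA ▸ ofReal_moment_add_le_lintegral hb hη ht hpos hdiff hderiv hAint hwidth
end

section
/- Let g : R^n → [0, M] be an integrable radially symmetric non-increasing function (g(x) = g₀(|x|) with g₀ decreasing), M > 0, n ≥ 1, k ≥ 1, and suppose Λ := n·B_n·∫₀^∞ s^{n+3} g₀(s) ds satisfies the hypotheses that g₀ is differentiable with −η ≤ g₀' ≤ 0 and ∫₀^∞ s^{n−1} g₀(s) ds = k/(n·B_n) > 0. Then Λ ≥ (n/(n+4))·B_n^{−4/n}·k^{(n+4)/n}·g₀(0)^{−4/n} + (1/(3(n+4)η²))·k^{(n+2)/n}·B_n^{−2/n}·g₀(0)^{(2n−2)/n} + ((n+2)²/(72n(n+4)²η⁴))·k·g₀(0)⁴. -/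
open Real MeasureTheory Set

/-!
After integration by parts the moments of `g₀` become moments `X p = ∫ s ^ p * h s` of `h = -g₀'`,
a density with `0 ≤ h ≤ η` and mass `η * L`, where `L = g₀ 0 / η`. Let `r` be the radius for which
`X b = η * L * r ^ b`; the leading term of the bound is what Jensen's inequality would give, and
the other two measure how far `h` must be from a point mass at `r`.

The tangent inequality
`r^(b-1) * ((s-r)^2 * (s+2*r)) ≤ b * s^(b+2) - (b+2) * r^2 * s^b + 2 * r^(b+2)`
replaces this deficit, for every exponent `b`, by the integral of one cubic. Since `h ≤ η`, the
bathtub principle bounds that integral below by its value when all the mass sits on a sublevel set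
of the cubic, an interval of length `L`. The result is
`(r ^ 2 + L ^ 2 / (5 * b)) * X b ≤ X (b + 2)`, and squaring it through
`X (b + 2) ^ 2 ≤ X b * X (b + 4)` gives all three terms.
-/

open Filter Topology

theorem mul_setIntegral_le_integral_mul {α : Type*} [MeasurableSpace α] {μ : Measure α}
    {S : Set α} {q h : α → ℝ} {η lam : ℝ} (hS : MeasurableSet S) (hμS : μ S ≠ ⊤)
    (hq : IntegrableOn q S μ) (hh : Integrable h μ) (hqh : Integrable (fun x => q x * h x) μ)
    (h_nonneg : ∀ᵐ x ∂μ, 0 ≤ h x) (h_le : ∀ᵐ x ∂μ, h x ≤ η) (hmass : ∫ x, h x ∂μ = η * μ.real S)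
    (hin : ∀ x ∈ S, q x ≤ lam) (hout : ∀ᵐ x ∂μ, x ∉ S → lam ≤ q x) :
    η * ∫ x in S, q x ∂μ ≤ ∫ x, q x * h x ∂μ := by
  have hqS : IntegrableOn (fun x => η * (q x - lam)) S μ :=
    (hq.sub (integrableOn_const hμS)).const_mul η
  have hpointwise : ∀ᵐ x ∂μ, S.indicator (fun x => η * (q x - lam)) x ≤ q x * h x - lam * h x := by
    filter_upwards [h_nonneg, h_le, hout] with x hx0 hxη hxout
    by_cases hx : x ∈ S
    · rw [indicator_of_mem hx]
      nlinarith [hin x hx]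
    · rw [indicator_of_notMem hx]
      nlinarith [hxout hx]
  have hint := integral_mono_ae (hqS.integrable_indicator hS) (hqh.sub (hh.const_mul lam))
    hpointwise
  rw [integral_indicator hS, integral_const_mul,
    integral_sub hq (integrableOn_const hμS), setIntegral_const, smul_eq_mul,
    integral_sub' hqh (hh.const_mul lam), integral_const_mul, hmass] at hint
  linarith

theorem mul_rpow_le_mul_rpow_add {p q t : ℝ} (hp : 0 ≤ p) (hpq : p ≤ q) (ht : 0 ≤ t) :
    q * t ^ p ≤ p * t ^ q + (q - p) := by
  rcases hp.eq_or_lt with rfl | hp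
  · simp
  have hq : 0 < q := hp.trans_le hpq
  have bernoulli : (1 + (t ^ q - 1)) ^ (p / q) ≤ 1 + p / q * (t ^ q - 1) :=
    rpow_one_add_le_one_add_mul_self (by linarith [rpow_nonneg ht q]) (by positivity)
      ((div_le_one hq).2 hpq)
  rw [add_sub_cancel, ← rpow_mul ht, mul_div_cancel₀ p hq.ne'] at bernoulli
  calc q * t ^ p ≤ q * (1 + p / q * (t ^ q - 1)) := by gcongr
    _ = p * t ^ q + (q - p) := by field_simp; ring

theorem rpow_tangent_cubic_one {b t : ℝ} (hb : 1 ≤ b) (ht : 0 ≤ t) :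
    (t - 1) ^ 2 * (t + 2) ≤ b * t ^ (b + 2) - (b + 2) * t ^ b + 2 := by
  have hlow := mul_rpow_le_mul_rpow_add (p := b - 1) (q := b + 1) (by linarith) (by linarith) ht
  have htwo := mul_rpow_le_mul_rpow_add (p := 2) (q := b + 1) zero_le_two (by linarith) ht
  rw [rpow_two] at htwo
  have hdiv : (b + 2) * t ^ (b - 1) + t ^ 2 ≤ b * t ^ (b + 1) + 3 := by
    have : 0 < b + 1 := by linarith
    refine le_of_mul_le_mul_left ?_ this
    linear_combination (b + 2) * hlow + htwo
  have hpow : t ^ b = t ^ (b - 1) * t := by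
    rw [← rpow_add_one' ht (by linarith), sub_add_cancel]
  have hpow_add_two : t ^ (b + 2) = t ^ (b + 1) * t := by
    rw [← rpow_add_one' ht (by linarith)]; ring_nf
  rw [hpow, hpow_add_two]
  linear_combination t * hdiv

theorem rpow_tangent_cubic {b r s : ℝ} (hb : 1 ≤ b) (hr : 0 < r) (hs : 0 ≤ s) :
    r ^ (b - 1) * ((s - r) ^ 2 * (s + 2 * r)) ≤
      b * s ^ (b + 2) - (b + 2) * r ^ 2 * s ^ b + 2 * r ^ (b + 2) := by
  obtain ⟨t, ht, rfl⟩ : ∃ t, 0 ≤ t ∧ s = r * t := ⟨s / r, by positivity, by field_simp⟩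
  have hone := mul_le_mul_of_nonneg_left (rpow_tangent_cubic_one hb ht) (rpow_nonneg hr.le (b + 2))
  have hpow_add_two : r ^ (b + 2) = r ^ (b - 1) * r ^ 3 := by
    rw [← rpow_add_natCast hr.ne']; congr 1; push_cast; ring
  have hpow : r ^ b = r ^ (b - 1) * r := by rw [← rpow_add_one hr.ne', sub_add_cancel]
  rw [hpow_add_two] at hone
  rw [mul_rpow hr.le ht, mul_rpow hr.le ht, hpow_add_two, hpow]
  linear_combination hone

theorem mul_rpow_mul_le_integral_half {f : ℝ → ℝ} {p s : ℝ} (hp : 0 < p)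
    (hanti : AntitoneOn f (Ioi 0)) (hint : IntegrableOn (fun s => s ^ (p - 1) * f s) (Ioi 0))
    (hs : 0 < s) : (1 - 2⁻¹ ^ p) / p * (s ^ p * f s) ≤ ∫ t in (s / 2)..s, t ^ (p - 1) * f t :=
  have hhalf : s / 2 ≤ s := by linarith
  calc (1 - 2⁻¹ ^ p) / p * (s ^ p * f s) = ∫ t in (s / 2)..s, t ^ (p - 1) * f s := by
        rw [intervalIntegral.integral_mul_const, integral_rpow (Or.inl (by linarith)),
          sub_add_cancel, div_eq_mul_inv s 2, mul_rpow hs.le (by norm_num)]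
        ring
    _ ≤ ∫ t in (s / 2)..s, t ^ (p - 1) * f t := by
        refine intervalIntegral.integral_mono_on hhalf
          ((intervalIntegral.intervalIntegrable_rpow' (by linarith)).mul_const _)
          ((intervalIntegrable_iff_integrableOn_Ioc_of_le hhalf).2
            (hint.mono_set fun t ht => (half_pos hs).trans ht.1)) fun t ht => ?_
        have ht0 : 0 < t := (half_pos hs).trans_le ht.1
        exact mul_le_mul_of_nonneg_left (hanti ht0 hs ht.2) (rpow_nonneg ht0.le _)

theorem tendsto_rpow_mul_atTop_zero {f : ℝ → ℝ} {p : ℝ} (hp : 0 < p)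
    (hanti : AntitoneOn f (Ioi 0)) (hf : ∀ s, 0 < s → 0 ≤ f s)
    (hint : IntegrableOn (fun s => s ^ (p - 1) * f s) (Ioi 0)) :
    Tendsto (fun s => s ^ p * f s) atTop (𝓝 0) := by
  set F : ℝ → ℝ := fun s => ∫ t in (0 : ℝ)..s, t ^ (p - 1) * f t
  have hgap : Tendsto (fun s => F s - F (s / 2)) atTop (𝓝 0) := by
    have hlim := intervalIntegral_tendsto_integral_Ioi 0 hint tendsto_id
    have hlim_half := intervalIntegral_tendsto_integral_Ioi 0 hint
      (tendsto_id.atTop_div_const (zero_lt_two' ℝ))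
    simpa using hlim.sub hlim_half
  have hint_zero : ∀ {x : ℝ}, 0 ≤ x →
      IntervalIntegrable (fun t => t ^ (p - 1) * f t) volume 0 x := fun hx =>
    (intervalIntegrable_iff_integrableOn_Ioc_of_le hx).2 (hint.mono_set Ioc_subset_Ioi_self)
  have hbound : ∀ s, 0 < s → (1 - 2⁻¹ ^ p) / p * (s ^ p * f s) ≤ F s - F (s / 2) := fun s hs => by
    rw [intervalIntegral.integral_interval_sub_left (hint_zero hs.le) (hint_zero (half_pos hs).le)]
    exact mul_rpow_mul_le_integral_half hp hanti hint hs
  have hc : 0 < (1 - 2⁻¹ ^ p) / p :=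
    div_pos (sub_pos.2 (rpow_lt_one (by norm_num) (by norm_num) hp)) hp
  have hscaled : Tendsto (fun s => (1 - 2⁻¹ ^ p) / p * (s ^ p * f s)) atTop (𝓝 0) := by
    refine tendsto_of_tendsto_of_tendsto_of_le_of_le' tendsto_const_nhds hgap ?_ ?_
    · filter_upwards [eventually_gt_atTop 0] with s hs
      have := hf s hs
      positivity
    · filter_upwards [eventually_gt_atTop 0] with s hs using hbound s hs
  simpa only [mul_zero, inv_mul_cancel_left₀ hc.ne'] using
    hscaled.const_mul ((1 - 2⁻¹ ^ p) / p)⁻¹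

theorem hasDerivAt_primitive_Ioi {f : ℝ → ℝ} {a s : ℝ} (hf : ContinuousOn f (Ioi a))
    (hint : IntegrableOn f (Ioi a)) (hs : a < s) :
    HasDerivAt (fun x => ∫ t in a..x, f t) (f s) s :=
  intervalIntegral.integral_hasDerivAt_right
    ((intervalIntegrable_iff_integrableOn_Ioc_of_le hs.le).2 (hint.mono_set Ioc_subset_Ioi_self))
    (hf.stronglyMeasurableAtFilter isOpen_Ioi s hs) (hf.continuousAt (Ioi_mem_nhds hs))

theorem continuousWithinAt_primitive_Ici {f : ℝ → ℝ} {a : ℝ} (hint : IntegrableOn f (Ioi a)) :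
    ContinuousWithinAt (fun x => ∫ t in a..x, f t) (Ici a) a := by
  have hcont : ContinuousOn (fun x => ∫ t in a..x, f t) (uIcc a (a + 1)) :=
    intervalIntegral.continuousOn_primitive_interval
      ((integrableOn_Ici_iff_integrableOn_Ioi).2 hint |>.mono_set fun x hx => by
        rw [uIcc_of_le (by linarith)] at hx; exact hx.1)
  rw [uIcc_of_le (by linarith)] at hcont
  exact (hcont a (left_mem_Icc.2 (by linarith))).mono_of_mem_nhdsWithin
    (Icc_mem_nhdsGE (by linarith))

/-- The moment of order `p` of `f` on `(0, ∞)`. Being a Bochner integral it is `0` when it diverges,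
so it is meaningful only together with `HasRpowMoment f p`. -/
noncomputable def rpowMoment (f : ℝ → ℝ) (p : ℝ) : ℝ := ∫ s in Ioi (0 : ℝ), s ^ p * f s

/-- The moment of order `p` of `f` on `(0, ∞)` converges absolutely. -/
def HasRpowMoment (f : ℝ → ℝ) (p : ℝ) : Prop := IntegrableOn (fun s => s ^ p * f s) (Ioi 0)

section DerivMoments

variable {f : ℝ → ℝ} {p : ℝ}

theorem antitoneOn_Ici_of_deriv_nonpos (hcont : ContinuousOn f (Ici 0))
    (hdiff : ∀ s, 0 < s → DifferentiableAt ℝ f s) (hderiv : ∀ s, 0 < s → deriv f s ≤ 0) :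
    AntitoneOn f (Ici 0) :=
  antitoneOn_of_deriv_nonpos (convex_Ici 0) hcont
    (fun s hs => (hdiff s (by simpa using hs)).differentiableWithinAt)
    fun s hs => hderiv s (by simpa using hs)

theorem hasRpowMoment_neg_deriv_and_eq (hp : 0 < p) (hcont : ContinuousOn f (Ici 0))
    (hdiff : ∀ s, 0 < s → DifferentiableAt ℝ f s) (hf : ∀ s, 0 < s → 0 ≤ f s)
    (hderiv : ∀ s, 0 < s → deriv f s ≤ 0) (hint : HasRpowMoment f (p - 1)) :
    HasRpowMoment (fun s => -deriv f s) p ∧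
      rpowMoment (fun s => -deriv f s) p = p * rpowMoment f (p - 1) := by
  have hcont_integrand : ContinuousOn (fun s => s ^ (p - 1) * f s) (Ioi 0) :=
    (continuousOn_id.rpow_const fun s hs => Or.inl (ne_of_gt hs)).mul
      (hcont.mono Ioi_subset_Ici_self)
  set F : ℝ → ℝ := fun s => ∫ t in (0 : ℝ)..s, t ^ (p - 1) * f t with hF
  have hG_deriv : ∀ s ∈ Ioi (0 : ℝ),
      HasDerivAt (fun s => p * F s - s ^ p * f s) (s ^ p * -deriv f s) s := by
    intro s hs
    refine (((hasDerivAt_primitive_Ioi hcont_integrand hint hs).const_mul p).sub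
      ((hasDerivAt_rpow_const (Or.inl (ne_of_gt hs))).mul
        (hdiff s hs).hasDerivAt)).congr_deriv ?_
    ring
  have hG_cont : ContinuousWithinAt (fun s => p * F s - s ^ p * f s) (Ici 0) 0 :=
    ((continuousWithinAt_primitive_Ici hint).const_mul p).sub
      ((continuousAt_rpow_const 0 p (Or.inr hp.le)).continuousWithinAt.mul (hcont 0 self_mem_Ici))
  have hG_lim : Tendsto (fun s => p * F s - s ^ p * f s) atTop (𝓝 (p * rpowMoment f (p - 1))) := by
    have hdecay := tendsto_rpow_mul_atTop_zero hp
      ((antitoneOn_Ici_of_deriv_nonpos hcont hdiff hderiv).mono Ioi_subset_Ici_self) hf hint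
    have hF_lim : Tendsto F atTop (𝓝 (rpowMoment f (p - 1))) :=
      intervalIntegral_tendsto_integral_Ioi 0 hint tendsto_id
    simpa only [sub_zero] using (hF_lim.const_mul p).sub hdecay
  have hG_nonneg : ∀ s ∈ Ioi (0 : ℝ), 0 ≤ s ^ p * -deriv f s := fun s hs =>
    mul_nonneg (rpow_nonneg (le_of_lt hs) p) (neg_nonneg.2 (hderiv s hs))
  refine ⟨integrableOn_Ioi_deriv_of_nonneg hG_cont hG_deriv hG_nonneg hG_lim, ?_⟩
  rw [rpowMoment, integral_Ioi_of_hasDerivAt_of_nonneg hG_cont hG_deriv hG_nonneg hG_lim]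
  simp [hF, zero_rpow hp.ne']

theorem integrableOn_neg_deriv_and_integral_eq (hcont : ContinuousOn f (Ici 0))
    (hdiff : ∀ s, 0 < s → DifferentiableAt ℝ f s)
    (hderiv : ∀ s, 0 < s → deriv f s ≤ 0) (hlim : Tendsto f atTop (𝓝 0)) :
    IntegrableOn (fun s => -deriv f s) (Ioi 0) ∧ ∫ s in Ioi (0 : ℝ), -deriv f s = f 0 := by
  have hd : ∀ s ∈ Ioi (0 : ℝ), HasDerivAt (fun s => -f s) (-deriv f s) s :=
    fun s hs => (hdiff s hs).hasDerivAt.neg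
  have hnn : ∀ s ∈ Ioi (0 : ℝ), 0 ≤ -deriv f s := fun s hs => neg_nonneg.2 (hderiv s hs)
  refine ⟨integrableOn_Ioi_deriv_of_nonneg (hcont 0 self_mem_Ici).neg hd hnn hlim.neg, ?_⟩
  rw [integral_Ioi_of_hasDerivAt_of_nonneg (hcont 0 self_mem_Ici).neg hd hnn hlim.neg]
  simp

end DerivMoments

/-- `h` is a density on `(0, ∞)` with `0 ≤ h ≤ η` and total mass `η * L`. Writing the mass this way
makes `L` the length of an interval on which the extremal density `h = η` carries it. -/
structure IsBoundedDensity (h : ℝ → ℝ) (η L : ℝ) : Prop where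
  integrableOn : IntegrableOn h (Ioi 0)
  nonneg : ∀ s, 0 < s → 0 ≤ h s
  le : ∀ s, 0 < s → h s ≤ η
  integral_eq : ∫ s in Ioi (0 : ℝ), h s = η * L

theorem HasRpowMoment.of_le {h : ℝ → ℝ} {p q : ℝ} (hh : IntegrableOn h (Ioi 0))
    (hq : HasRpowMoment h q) (hp : 0 ≤ p) (hpq : p ≤ q) : HasRpowMoment h p := by
  refine Integrable.mono' (hh.norm.add hq.norm) ?_ ?_
  · exact (measurable_id.pow_const p).aestronglyMeasurable.mul hh.aestronglyMeasurable
  · filter_upwards [ae_restrict_mem measurableSet_Ioi] with s (hs : 0 < s)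
    have hpow : s ^ p ≤ 1 + s ^ q := by
      rcases le_total s 1 with h1 | h1
      · linarith [rpow_le_one hs.le h1 hp, rpow_nonneg hs.le q]
      · linarith [rpow_le_rpow_of_exponent_le h1 hpq]
    simp only [Pi.add_apply, norm_mul, norm_of_nonneg (rpow_nonneg hs.le _)]
    linarith [mul_le_mul_of_nonneg_right hpow (norm_nonneg (h s))]

theorem sq_mul_rpowMoment_le_rpowMoment_add_four {h : ℝ → ℝ} {b m : ℝ}
    (h_nonneg : ∀ s, 0 < s → 0 ≤ h s)
    (hmoment : HasRpowMoment h b) (hmoment₂ : HasRpowMoment h (b + 2))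
    (hmoment₄ : HasRpowMoment h (b + 4)) (hm : 0 ≤ m)
    (hle : m * rpowMoment h b ≤ rpowMoment h (b + 2)) :
    m ^ 2 * rpowMoment h b ≤ rpowMoment h (b + 4) := by
  have hpointwise : ∀ s ∈ Ioi (0 : ℝ),
      2 * m * (s ^ (b + 2) * h s) - m ^ 2 * (s ^ b * h s) ≤ s ^ (b + 4) * h s := fun s hs => by
    have hpow_add_two : s ^ (b + 2) = s ^ b * s ^ 2 := by
      exact_mod_cast rpow_add_natCast (ne_of_gt hs) b 2
    have hpow_add_four : s ^ (b + 4) = s ^ b * s ^ 4 := by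
      exact_mod_cast rpow_add_natCast (ne_of_gt hs) b 4
    have hsquare : 0 ≤ s ^ b * h s * (s ^ 2 - m) ^ 2 :=
      mul_nonneg (mul_nonneg (rpow_nonneg (le_of_lt hs) b) (h_nonneg s hs)) (sq_nonneg _)
    rw [hpow_add_two, hpow_add_four]
    linear_combination hsquare
  have hintegrated := setIntegral_mono_on
    ((hmoment₂.const_mul (2 * m)).sub (hmoment.const_mul (m ^ 2))) hmoment₄ measurableSet_Ioi
    hpointwise
  rw [integral_sub' (hmoment₂.const_mul (2 * m)) (hmoment.const_mul (m ^ 2)), integral_const_mul,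
    integral_const_mul] at hintegrated
  change 2 * m * rpowMoment h (b + 2) - m ^ 2 * rpowMoment h b ≤ rpowMoment h (b + 4)
    at hintegrated
  linear_combination hintegrated + 2 * m * hle

theorem integral_sub_sq_mul_add_two_mul (r a c : ℝ) : ∫ s in a..c, (s - r) ^ 2 * (s + 2 * r) =
    (c ^ 4 - a ^ 4) / 4 - 3 * r ^ 2 * (c ^ 2 - a ^ 2) / 2 + 2 * r ^ 3 * (c - a) := by
  have hderiv : ∀ s ∈ uIcc a c, HasDerivAt
      (fun s => s ^ 4 / 4 - 3 * r ^ 2 * (s ^ 2 / 2) + 2 * r ^ 3 * s)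
      ((s - r) ^ 2 * (s + 2 * r)) s := fun s _ => by
    refine ((((hasDerivAt_pow 4 s).div_const 4).sub
      (((hasDerivAt_pow 2 s).div_const 2).const_mul (3 * r ^ 2))).add
      ((hasDerivAt_id s).const_mul (2 * r ^ 3))).congr_deriv ?_
    push_cast
    ring
  rw [intervalIntegral.integral_eq_sub_of_hasDerivAt hderiv
    (Continuous.intervalIntegrable (by fun_prop) _ _)]
  ring

namespace IsBoundedDensity

variable {h : ℝ → ℝ} {η L b r : ℝ}

theorem bound_nonneg (hh : IsBoundedDensity h η L) : 0 ≤ η :=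
  (hh.nonneg 1 one_pos).trans (hh.le 1 one_pos)

theorem mul_intervalIntegral_le {q : ℝ → ℝ} {a lam : ℝ} (hh : IsBoundedDensity h η L)
    (ha : 0 ≤ a) (hL : 0 ≤ L) (hq : ContinuousOn q (Icc a (a + L)))
    (hqh : IntegrableOn (fun s => q s * h s) (Ioi 0))
    (hin : ∀ s ∈ Icc a (a + L), q s ≤ lam)
    (hout : ∀ s, 0 < s → s ≤ a ∨ a + L ≤ s → lam ≤ q s) :
    η * ∫ s in a..a + L, q s ≤ ∫ s in Ioi (0 : ℝ), q s * h s := by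
  have hrestrict : (volume.restrict (Ioi 0)).restrict (Ioc a (a + L)) =
      volume.restrict (Ioc a (a + L)) := by
    rw [Measure.restrict_restrict measurableSet_Ioc,
      inter_eq_left.2 (Ioc_subset_Ioi_self.trans (Ioi_subset_Ioi ha))]
  have hmeasure : (volume.restrict (Ioi 0)) (Ioc a (a + L)) = ENNReal.ofReal L := by
    rw [← Measure.restrict_apply_self, hrestrict, Measure.restrict_apply_self, Real.volume_Ioc,
      add_sub_cancel_left]
  rw [intervalIntegral.integral_of_le (by linarith), ← hrestrict]
  refine mul_setIntegral_le_integral_mul (lam := lam) measurableSet_Ioc (by simp [hmeasure]) ?_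
    hh.integrableOn hqh ((ae_restrict_mem measurableSet_Ioi).mono hh.nonneg)
    ((ae_restrict_mem measurableSet_Ioi).mono hh.le) ?_
    (fun s hs => hin s (Ioc_subset_Icc_self hs)) ?_
  · rw [IntegrableOn, hrestrict]
    exact hq.integrableOn_Icc.mono_set Ioc_subset_Icc_self
  · rw [hh.integral_eq, Measure.real, hmeasure, ENNReal.toReal_ofReal hL]
  · filter_upwards [ae_restrict_mem measurableSet_Ioi] with s hs hns
    refine hout s hs (or_iff_not_imp_left.2 fun hsa => ?_)
    exact le_of_not_ge fun hsL => hns ⟨not_le.1 hsa, hsL⟩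

theorem half_le_of_rpowMoment_eq (hh : IsBoundedDensity h η L) (hη : 0 < η) (hL : 0 < L)
    (hb : 1 ≤ b) (hr : 0 ≤ r) (hmoment : HasRpowMoment h b)
    (hrb : rpowMoment h b = η * L * r ^ b) : L / 2 ≤ r := by
  have hb0 : 0 < b := by linarith
  have hbathtub : η * ∫ s in (0 : ℝ)..0 + L, s ^ b ≤ rpowMoment h b :=
    hh.mul_intervalIntegral_le (lam := L ^ b) le_rfl hL.le
      (continuousOn_id.rpow_const fun s _ => Or.inr hb0.le) hmoment
      (fun s hs => rpow_le_rpow hs.1 (by simpa using hs.2) hb0.le) fun s hs hs' =>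
        rpow_le_rpow hL.le (by rcases hs' with hs' | hs' <;> linarith) hb0.le
  rw [zero_add, integral_rpow (Or.inl (by linarith)), zero_rpow (by linarith), sub_zero, hrb,
    rpow_add_one hL.ne'] at hbathtub
  have hLr : L ^ b ≤ (b + 1) * r ^ b := by
    have : 0 < η * L / (b + 1) := by positivity
    refine le_of_mul_le_mul_left ?_ this
    calc η * L / (b + 1) * L ^ b = η * (L ^ b * L / (b + 1)) := by ring
      _ ≤ η * L * r ^ b := hbathtub
      _ = η * L / (b + 1) * ((b + 1) * r ^ b) := by field_simp
  have hbernoulli : b + 1 ≤ 2 ^ b := by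
    have := one_add_mul_self_le_rpow_one_add (s := 1) (by norm_num) hb
    norm_num at this
    linarith
  rw [div_le_iff₀ two_pos, ← rpow_le_rpow_iff hL.le (by positivity) hb0, mul_rpow hr zero_le_two]
  nlinarith [rpow_nonneg hr b]

theorem integrableOn_cubic_mul (hh : IsBoundedDensity h η L) {p : ℝ} (hp : 3 ≤ p)
    (hmoment : HasRpowMoment h p) (r : ℝ) :
    IntegrableOn (fun s => (s - r) ^ 2 * (s + 2 * r) * h s) (Ioi 0) := by
  have h3 : IntegrableOn (fun s => s ^ 3 * h s) (Ioi 0) := by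
    simpa [HasRpowMoment] using
      HasRpowMoment.of_le hh.integrableOn hmoment (p := (3 : ℕ)) (by positivity)
        (by exact_mod_cast hp)
  have h1 : IntegrableOn (fun s => s * h s) (Ioi 0) := by
    simpa [HasRpowMoment] using
      HasRpowMoment.of_le hh.integrableOn hmoment (p := 1) zero_le_one (by linarith)
  exact ((h3.sub (h1.const_mul (3 * r ^ 2))).add (hh.integrableOn.const_mul (2 * r ^ 3))).congr
    (Eventually.of_forall fun s => by simp only [Pi.add_apply, Pi.sub_apply]; ring)

theorem le_integral_cubic_mul_of_three_mul_sq_le (hh : IsBoundedDensity h η L) (hL : 0 < L)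
    (hLr : L / 2 ≤ r) (hsmall : 3 * r ^ 2 ≤ L ^ 2)
    (hint : IntegrableOn (fun s => (s - r) ^ 2 * (s + 2 * r) * h s) (Ioi 0)) :
    L ^ 2 * r / 5 * (η * L) ≤ ∫ s in Ioi (0 : ℝ), (s - r) ^ 2 * (s + 2 * r) * h s := by
  have hcont : Continuous fun s : ℝ => (s - r) ^ 2 * (s + 2 * r) := by fun_prop
  have hη := hh.bound_nonneg
  have hincr : ∀ s, 0 ≤ s → 0 ≤ s ^ 2 + s * L + L ^ 2 - 3 * r ^ 2 := fun s hs => by nlinarith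
  have hbathtub := hh.mul_intervalIntegral_le (lam := (L - r) ^ 2 * (L + 2 * r)) le_rfl hL.le
    hcont.continuousOn hint
    (fun s ⟨hs0, hsL⟩ => by nlinarith [mul_nonneg (hincr s hs0) (by linarith : 0 ≤ L - s)])
    (fun s hs0 hs => by
      have hsL : L ≤ s := by rcases hs with hs | hs <;> linarith
      nlinarith [mul_nonneg (hincr s hs0.le) (sub_nonneg.2 hsL)])
  refine le_trans ?_ hbathtub
  have hr : 0 ≤ r := by linarith
  -- The difference of the two sides is smallest at `r ≈ 14 / 25 * L`.
  have hcubic : L ^ 2 * r / 5 ≤ L ^ 3 / 4 - 3 * r ^ 2 * L / 2 + 2 * r ^ 3 := by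
    nlinarith [mul_nonneg hr (sq_nonneg (r - 14 / 25 * L)),
      mul_nonneg hL.le (sq_nonneg (r - 14 / 25 * L))]
  rw [integral_sub_sq_mul_add_two_mul]
  calc L ^ 2 * r / 5 * (η * L)
      ≤ (L ^ 3 / 4 - 3 * r ^ 2 * L / 2 + 2 * r ^ 3) * (η * L) := by gcongr
    _ = _ := by ring

theorem le_integral_cubic_mul_of_le_three_mul_sq (hh : IsBoundedDensity h η L) (hL : 0 < L)
    (hLr : L / 2 ≤ r) (hlarge : L ^ 2 ≤ 3 * r ^ 2)
    (hint : IntegrableOn (fun s => (s - r) ^ 2 * (s + 2 * r) * h s) (Ioi 0)) :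
    L ^ 2 * r / 5 * (η * L) ≤ ∫ s in Ioi (0 : ℝ), (s - r) ^ 2 * (s + 2 * r) * h s := by
  have hcont : Continuous fun s : ℝ => (s - r) ^ 2 * (s + 2 * r) := by fun_prop
  have hη := hh.bound_nonneg
  -- The cubic takes equal values at `c ± L / 2` exactly when `3 * r ^ 2 = 3 * c ^ 2 + L ^ 2 / 4`.
  set c := √(r ^ 2 - L ^ 2 / 12) with hc
  have hc_sq : r ^ 2 = c ^ 2 + L ^ 2 / 12 := by rw [hc, sq_sqrt (by nlinarith)]; ring
  have hLc : L / 2 ≤ c := le_sqrt_of_sq_le (by nlinarith)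
  have hfactor : ∀ s, (s - r) ^ 2 * (s + 2 * r) - (c + L / 2 - r) ^ 2 * (c + L / 2 + 2 * r) =
      (s - (c + L / 2)) * (s - (c - L / 2)) * (s + 2 * c) := fun s => by
    linear_combination -3 * (s - (c + L / 2)) * hc_sq
  have hbathtub := hh.mul_intervalIntegral_le (a := c - L / 2)
    (lam := (c + L / 2 - r) ^ 2 * (c + L / 2 + 2 * r)) (by linarith) hL.le
    hcont.continuousOn hint
    (fun s ⟨hs0, hsL⟩ => by
      have : 0 ≤ (c + L / 2 - s) * (s - (c - L / 2)) * (s + 2 * c) :=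
        mul_nonneg (mul_nonneg (by linarith) (by linarith)) (by linarith)
      linarith [hfactor s])
    (fun s hs0 hs => by
      have : 0 ≤ (s - (c + L / 2)) * (s - (c - L / 2)) := by
        rcases hs with hs | hs
        · exact mul_nonneg_of_nonpos_of_nonpos (by linarith) (by linarith)
        · exact mul_nonneg (by linarith) (by linarith)
      linarith [hfactor s, mul_nonneg this (by linarith : 0 ≤ s + 2 * c)])
  refine le_trans ?_ hbathtub
  have hcr : c ≤ r := le_of_sq_le_sq (by nlinarith) (by linarith)
  have hcubic : L ^ 2 * r / 5 ≤ 2 * (r ^ 3 - c ^ 3) := by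
    have : 0 ≤ (r - c) * (5 * c ^ 2 - r * c - r ^ 2) := mul_nonneg (by linarith) (by nlinarith)
    nlinarith
  rw [integral_sub_sq_mul_add_two_mul]
  calc L ^ 2 * r / 5 * (η * L) ≤ 2 * (r ^ 3 - c ^ 3) * (η * L) := by gcongr
    _ = _ := by linear_combination 3 * η * L * c * hc_sq

-- The best constant here is about `0.233` instead of `1 / 5`; at least `7 / 36` is needed later.
theorem le_integral_cubic_mul (hh : IsBoundedDensity h η L) (hL : 0 < L)
    (hLr : L / 2 ≤ r) (hint : IntegrableOn (fun s => (s - r) ^ 2 * (s + 2 * r) * h s) (Ioi 0)) :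
    L ^ 2 * r / 5 * (η * L) ≤ ∫ s in Ioi (0 : ℝ), (s - r) ^ 2 * (s + 2 * r) * h s :=
  (le_total (3 * r ^ 2) (L ^ 2)).elim
    (fun h => hh.le_integral_cubic_mul_of_three_mul_sq_le hL hLr h hint)
    fun h => hh.le_integral_cubic_mul_of_le_three_mul_sq hL hLr h hint

theorem rpow_mul_integral_cubic_mul_le (hh : IsBoundedDensity h η L) (hb : 1 ≤ b) (hr : 0 < r)
    (hmoment : HasRpowMoment h (b + 2)) :
    r ^ (b - 1) * ∫ s in Ioi (0 : ℝ), (s - r) ^ 2 * (s + 2 * r) * h s ≤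
      b * rpowMoment h (b + 2) - (b + 2) * r ^ 2 * rpowMoment h b + 2 * r ^ (b + 2) * (η * L) := by
  have htop : IntegrableOn (fun s => b * (s ^ (b + 2) * h s)) (Ioi 0) := hmoment.const_mul b
  have hmid : IntegrableOn (fun s => (b + 2) * r ^ 2 * (s ^ b * h s)) (Ioi 0) :=
    (hmoment.of_le hh.integrableOn (by linarith) (by linarith)).const_mul _
  have hlow : IntegrableOn (fun s => 2 * r ^ (b + 2) * h s) (Ioi 0) := hh.integrableOn.const_mul _
  have hpointwise : ∀ s ∈ Ioi (0 : ℝ), r ^ (b - 1) * ((s - r) ^ 2 * (s + 2 * r) * h s) ≤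
      b * (s ^ (b + 2) * h s) - (b + 2) * r ^ 2 * (s ^ b * h s) + 2 * r ^ (b + 2) * h s :=
    fun s (hs : 0 < s) => by
      linear_combination
        mul_le_mul_of_nonneg_right (rpow_tangent_cubic hb hr hs.le) (hh.nonneg s hs)
  have hintegrated := setIntegral_mono_on
    ((hh.integrableOn_cubic_mul (by linarith) hmoment r).const_mul _) ((htop.sub hmid).add hlow)
    measurableSet_Ioi hpointwise
  rwa [integral_const_mul, integral_add' (htop.sub hmid) hlow, integral_sub' htop hmid,
    integral_const_mul, integral_const_mul, integral_const_mul, hh.integral_eq] at hintegrated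

theorem mul_rpowMoment_le_rpowMoment_add_two (hh : IsBoundedDensity h η L) (hL : 0 < L)
    (hb : 1 ≤ b) (hLr : L / 2 ≤ r) (hmoment : HasRpowMoment h (b + 2))
    (hrb : rpowMoment h b = η * L * r ^ b) :
    (r ^ 2 + L ^ 2 / (5 * b)) * rpowMoment h b ≤ rpowMoment h (b + 2) := by
  have hr : 0 < r := by linarith
  have hb0 : 0 < b := by linarith
  have htangent := hh.rpow_mul_integral_cubic_mul_le hb hr hmoment
  have hbathtub := mul_le_mul_of_nonneg_left
    (hh.le_integral_cubic_mul hL hLr (hh.integrableOn_cubic_mul (by linarith) hmoment r))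
    (rpow_nonneg hr.le (b - 1))
  have hpow_add_two : r ^ (b + 2) = r ^ b * r ^ 2 := by exact_mod_cast rpow_add_natCast hr.ne' b 2
  have hpow : r ^ b = r ^ (b - 1) * r := by rw [← rpow_add_one hr.ne', sub_add_cancel]
  refine le_of_mul_le_mul_left ?_ hb0
  calc b * ((r ^ 2 + L ^ 2 / (5 * b)) * rpowMoment h b)
      = b * r ^ 2 * rpowMoment h b + r ^ (b - 1) * (L ^ 2 * r / 5 * (η * L)) := by
        rw [hrb, hpow]; field_simp
    _ ≤ b * rpowMoment h (b + 2) := by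
        rw [hpow_add_two] at htangent
        linear_combination hbathtub + htangent - 2 * r ^ 2 * hrb

theorem mul_rpowMoment_le_mul_rpowMoment_add_four (hh : IsBoundedDensity h η L) (hη : 0 < η)
    (hL : 0 < L) (hb : 1 ≤ b) (hr : 0 ≤ r) (hmoment : HasRpowMoment h (b + 4))
    (hrb : rpowMoment h b = η * L * r ^ b) :
    (b * r ^ 4 + L ^ 2 * r ^ 2 / 3 + (b + 2) ^ 2 / (72 * b * (b + 4)) * L ^ 4) * rpowMoment h b ≤
      b * rpowMoment h (b + 4) := by
  have hb0 : 0 < b := by linarith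
  have hmoment₂ : HasRpowMoment h (b + 2) :=
    hmoment.of_le hh.integrableOn (by linarith) (by linarith)
  have hmoment₀ : HasRpowMoment h b := hmoment.of_le hh.integrableOn hb0.le (by linarith)
  have hLr : L / 2 ≤ r := hh.half_le_of_rpowMoment_eq hη hL hb hr hmoment₀ hrb
  have hfour := sq_mul_rpowMoment_le_rpowMoment_add_four hh.nonneg hmoment₀ hmoment₂ hmoment
    (by positivity) (hh.mul_rpowMoment_le_rpowMoment_add_two hL hb hLr hmoment₂ hrb)
  have hcoeff : (b + 2) ^ 2 / (72 * b * (b + 4)) ≤ 1 / 60 + 1 / (25 * b) := by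
    rw [← sub_nonneg]
    have : 1 / 60 + 1 / (25 * b) - (b + 2) ^ 2 / (72 * b * (b + 4)) =
        (5 * b ^ 2 + 92 * b + 188) / (1800 * b * (b + 4)) := by field_simp; ring
    rw [this]
    positivity
  have hfactor : b * r ^ 4 + L ^ 2 * r ^ 2 / 3 + (b + 2) ^ 2 / (72 * b * (b + 4)) * L ^ 4 ≤
      b * (r ^ 2 + L ^ 2 / (5 * b)) ^ 2 :=
    calc _ ≤ b * r ^ 4 + L ^ 2 * r ^ 2 / 3 + (1 / 60 + 1 / (25 * b)) * L ^ 4 := by gcongr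
      _ ≤ b * r ^ 4 + 2 * L ^ 2 * r ^ 2 / 5 + 1 / (25 * b) * L ^ 4 := by
        linear_combination L ^ 2 / 15 * pow_le_pow_left₀ (by positivity) hLr 2
      _ = b * (r ^ 2 + L ^ 2 / (5 * b)) ^ 2 := by field_simp; ring
  have hnonneg : 0 ≤ rpowMoment h b := by rw [hrb]; positivity
  calc _ ≤ b * (r ^ 2 + L ^ 2 / (5 * b)) ^ 2 * rpowMoment h b := by gcongr
    _ = b * ((r ^ 2 + L ^ 2 / (5 * b)) ^ 2 * rpowMoment h b) := by ring
    _ ≤ b * rpowMoment h (b + 4) := by gcongr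

end IsBoundedDensity

section Profile

variable {f : ℝ → ℝ} {b η r : ℝ}

theorem pos_of_rpowMoment_pos {p : ℝ} (hanti : AntitoneOn f (Ici 0)) (hf : 0 < rpowMoment f p) :
    0 < f 0 := by
  by_contra! hf0
  refine hf.not_ge (setIntegral_nonpos measurableSet_Ioi fun s hs => ?_)
  have hs' : 0 ≤ s := le_of_lt hs
  exact mul_nonpos_of_nonneg_of_nonpos (rpow_nonneg hs' p)
    ((hanti self_mem_Ici hs' hs').trans hf0)

theorem tendsto_atTop_zero_of_rpow_mul {p : ℝ} (hp : 0 < p)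
    (h : Tendsto (fun s => s ^ p * f s) atTop (𝓝 0)) : Tendsto f atTop (𝓝 0) := by
  have hprod := (tendsto_rpow_neg_atTop hp).mul h
  rw [mul_zero] at hprod
  refine hprod.congr' ?_
  filter_upwards [eventually_gt_atTop 0] with s hs
  rw [← mul_assoc, ← rpow_add hs, neg_add_cancel, rpow_zero, one_mul]

theorem isBoundedDensity_neg_deriv (hη : 0 < η) (hcont : ContinuousOn f (Ici 0))
    (hdiff : ∀ s, 0 < s → DifferentiableAt ℝ f s)
    (hderiv : ∀ s, 0 < s → -η ≤ deriv f s ∧ deriv f s ≤ 0) (hlim : Tendsto f atTop (𝓝 0)) :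
    IsBoundedDensity (fun s => -deriv f s) η (f 0 / η) := by
  obtain ⟨hint, heq⟩ :=
    integrableOn_neg_deriv_and_integral_eq hcont hdiff (fun s hs => (hderiv s hs).2) hlim
  exact ⟨hint, fun s hs => neg_nonneg.2 (hderiv s hs).2, fun s hs => neg_le.1 (hderiv s hs).1,
    by rw [heq, mul_div_cancel₀ _ hη.ne']⟩

theorem mul_rpowMoment_le_of_deriv_bounded (hb : 1 ≤ b) (hη : 0 < η) (hr : 0 ≤ r)
    (hcont : ContinuousOn f (Ici 0)) (hdiff : ∀ s, 0 < s → DifferentiableAt ℝ f s)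
    (hf : ∀ s, 0 < s → 0 ≤ f s) (hderiv : ∀ s, 0 < s → -η ≤ deriv f s ∧ deriv f s ≤ 0)
    (hf0 : 0 < f 0) (hmoment : HasRpowMoment f (b - 1)) (hmoment₄ : HasRpowMoment f (b + 3))
    (hrb : b * rpowMoment f (b - 1) = f 0 * r ^ b) :
    (b * r ^ 4 + (f 0 / η) ^ 2 * r ^ 2 / 3 +
      (b + 2) ^ 2 / (72 * b * (b + 4)) * (f 0 / η) ^ 4) * rpowMoment f (b - 1) ≤
      (b + 4) * rpowMoment f (b + 3) := by
  have hb0 : 0 < b := by linarith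
  have hderiv' : ∀ s, 0 < s → deriv f s ≤ 0 := fun s hs => (hderiv s hs).2
  have hlim : Tendsto f atTop (𝓝 0) := tendsto_atTop_zero_of_rpow_mul hb0 <|
    tendsto_rpow_mul_atTop_zero hb0
      ((antitoneOn_Ici_of_deriv_nonpos hcont hdiff hderiv').mono Ioi_subset_Ici_self) hf hmoment
  have hdensity := isBoundedDensity_neg_deriv hη hcont hdiff hderiv hlim
  have hshift : b + 4 - 1 = b + 3 := by ring
  obtain ⟨-, heq⟩ := hasRpowMoment_neg_deriv_and_eq hb0 hcont hdiff hf hderiv' hmoment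
  obtain ⟨hint₄, heq₄⟩ := hasRpowMoment_neg_deriv_and_eq (p := b + 4) (by linarith) hcont hdiff hf
    hderiv' (hshift ▸ hmoment₄)
  have hmain := hdensity.mul_rpowMoment_le_mul_rpowMoment_add_four hη (div_pos hf0 hη) hb hr hint₄
    (by rw [heq, hrb, mul_div_cancel₀ _ hη.ne'])
  rw [heq, heq₄, hshift] at hmain
  refine le_of_mul_le_mul_left ?_ hb0
  linear_combination hmain

end Profile

theorem rpow_add_div_mul_rpow_neg_div {k B G b : ℝ} (hk : 0 < k) (hB : 0 < B) (hG : 0 < G)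
    (hb : b ≠ 0) (j : ℕ) :
    k ^ ((b + j) / b) * B ^ (-j / b) * G ^ (-j / b) = k * ((k / (B * G)) ^ b⁻¹) ^ j := by
  rw [← rpow_mul_natCast (by positivity), div_rpow hk.le (by positivity),
    mul_rpow hB.le hG.le, add_div, div_self hb, rpow_add hk, rpow_one, neg_div, rpow_neg hB.le,
    rpow_neg hG.le, inv_mul_eq_div]
  field_simp

theorem stmt_16_general {b k η B : ℝ} {g₀ : ℝ → ℝ} (hb : 1 ≤ b) (hk : 0 < k) (hη : 0 < η)
    (hB : 0 < B) (hg0 : ∀ s, 0 < s → 0 ≤ g₀ s) (hcont : ContinuousOn g₀ (Ici 0))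
    (hdiff : ∀ s, 0 < s → DifferentiableAt ℝ g₀ s)
    (hderiv : ∀ s, 0 < s → -η ≤ deriv g₀ s ∧ deriv g₀ s ≤ 0)
    (hAint : IntegrableOn (fun s => s ^ (b - 1) * g₀ s) (Ioi 0))
    (hA : ∫ s in Ioi (0 : ℝ), s ^ (b - 1) * g₀ s = k / (b * B))
    (hDint : IntegrableOn (fun s => s ^ (b + 3) * g₀ s) (Ioi 0)) :
    (b / (b + 4)) * B ^ (-4 / b) * k ^ ((b + 4) / b) * g₀ 0 ^ (-4 / b)
      + (1 / (3 * (b + 4) * η ^ 2)) * k ^ ((b + 2) / b) * B ^ (-2 / b) * g₀ 0 ^ ((2 * b - 2) / b)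
      + ((b + 2) ^ 2 / (72 * b * (b + 4) ^ 2 * η ^ 4)) * k * g₀ 0 ^ 4
    ≤ b * B * ∫ s in Ioi (0 : ℝ), s ^ (b + 3) * g₀ s := by
  have hb0 : 0 < b := by linarith
  have hA' : rpowMoment g₀ (b - 1) = k / (b * B) := hA
  have hG : 0 < g₀ 0 := pos_of_rpowMoment_pos
    (antitoneOn_Ici_of_deriv_nonpos hcont hdiff fun s hs => (hderiv s hs).2)
    (hA' ▸ by positivity : 0 < rpowMoment g₀ (b - 1))
  set r := (k / (B * g₀ 0)) ^ b⁻¹ with hr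
  have hrb : b * rpowMoment g₀ (b - 1) = g₀ 0 * r ^ b := by
    rw [hA', hr, rpow_inv_rpow (by positivity) hb0.ne']
    field_simp
  have hmain := mul_rpowMoment_le_of_deriv_bounded hb hη (by positivity) hcont hdiff hg0 hderiv hG
    hAint hDint hrb
  have hfour := rpow_add_div_mul_rpow_neg_div hk hB hG hb0.ne' 4
  have htwo := rpow_add_div_mul_rpow_neg_div hk hB hG hb0.ne' 2
  have hG_rpow : g₀ 0 ^ ((2 * b - 2) / b) = g₀ 0 ^ 2 * g₀ 0 ^ (-2 / b) := by
    rw [← rpow_natCast, ← rpow_add hG]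
    congr 1
    push_cast
    field_simp
    ring
  push_cast at hfour htwo
  calc _ = b / (b + 4) * (k ^ ((b + 4) / b) * B ^ (-4 / b) * g₀ 0 ^ (-4 / b))
        + 1 / (3 * (b + 4) * η ^ 2) * g₀ 0 ^ 2 *
          (k ^ ((b + 2) / b) * B ^ (-2 / b) * g₀ 0 ^ (-2 / b))
        + (b + 2) ^ 2 / (72 * b * (b + 4) ^ 2 * η ^ 4) * k * g₀ 0 ^ 4 := by rw [hG_rpow]; ring
    _ = b * B / (b + 4) * ((b * r ^ 4 + (g₀ 0 / η) ^ 2 * r ^ 2 / 3 +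
          (b + 2) ^ 2 / (72 * b * (b + 4)) * (g₀ 0 / η) ^ 4) * rpowMoment g₀ (b - 1)) := by
        rw [hfour, htwo, hA', ← hr]
        field_simp
    _ ≤ b * B / (b + 4) * ((b + 4) * rpowMoment g₀ (b + 3)) := by gcongr
    _ = _ := by rw [rpowMoment]; field_simp

theorem stmt_16 (n k : ℕ) (hn : 1 ≤ n) (hk : 1 ≤ k) (M η : ℝ) (hM : 0 < M) (hη : 0 < η)
    (B : ℝ)
    (hB : B = (volume (Metric.ball (0 : EuclideanSpace ℝ (Fin n)) 1)).toReal)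
    (g : EuclideanSpace ℝ (Fin n) → ℝ) (g₀ : ℝ → ℝ)
    (hrad : ∀ x, g x = g₀ ‖x‖)
    (hg0 : ∀ s, 0 ≤ s → 0 ≤ g₀ s) (hgM : ∀ s, 0 ≤ s → g₀ s ≤ M)
    (hanti : AntitoneOn g₀ (Ici 0))
    (hdiff : Differentiable ℝ g₀)
    (hderiv : ∀ s, 0 ≤ s → -η ≤ deriv g₀ s ∧ deriv g₀ s ≤ 0)
    (hAint : IntegrableOn (fun s => s ^ ((n : ℝ) - 1) * g₀ s) (Ioi 0))
    (hA : (∫ s in Ioi (0 : ℝ), s ^ ((n : ℝ) - 1) * g₀ s) = k / (n * B))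
    (hDint : IntegrableOn (fun s => s ^ ((n : ℝ) + 3) * g₀ s) (Ioi 0))
    (Λ : ℝ) (hΛ : Λ = n * B * ∫ s in Ioi (0 : ℝ), s ^ ((n : ℝ) + 3) * g₀ s) :
    (n / ((n : ℝ) + 4)) * B ^ (-(4 : ℝ) / n) * (k : ℝ) ^ (((n : ℝ) + 4) / n) * g₀ 0 ^ (-(4 : ℝ) / n)
      + (1 / (3 * ((n : ℝ) + 4) * η ^ (2 : ℕ))) * (k : ℝ) ^ (((n : ℝ) + 2) / n)
          * B ^ (-(2 : ℝ) / n) * g₀ 0 ^ ((2 * (n : ℝ) - 2) / n)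
      + (((n : ℝ) + 2) ^ (2 : ℕ) / (72 * n * ((n : ℝ) + 4) ^ (2 : ℕ) * η ^ (4 : ℕ)))
          * (k : ℝ) * g₀ 0 ^ (4 : ℕ)
    ≤ Λ := by
  subst hB hΛ
  have hball : 0 < (volume (Metric.ball (0 : EuclideanSpace ℝ (Fin n)) 1)).toReal :=
    ENNReal.toReal_pos (Metric.measure_ball_pos volume _ one_pos).ne' measure_ball_lt_top.ne
  exact stmt_16_general (by exact_mod_cast hn) (by exact_mod_cast hk) hη hball
    (fun s hs => hg0 s hs.le) hdiff.continuous.continuousOn (fun s _ => hdiff s)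
    (fun s hs => hderiv s hs.le) hAint hA hDint
end
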